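/- arXiv:0804.2911 — 2 statements merged into one kernel-verified Lean document; each statement's English description precedes it below -/
import Mathlib

section
/- Let U ⊆ ℝⁿ be open, let Γ be smooth Christoffel symbols on U, let h be a smooth metric on U, and let μ : U → ℝ be a smooth positive function. Suppose ∇h = h ⊗ Ψ on U where Ψ is the 1-form with components Ψₖ = ∂ₖ(log μ) (equivalently Ψₖ = (∂ₖμ)/μ). Then the field μ⁻¹h is parallel: ∂ₖ(μ⁻¹h)ᵢⱼ − Σₗ Γˡₖᵢ (μ⁻¹h)ₗⱼ − Σₗ Γˡₖⱼ (μ⁻¹h)ᵢₗ = 0 on U for all i,j,k. -/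
/-- The `k`-th partial derivative of a scalar function on `ℝⁿ`. -/
noncomputable def pd {n : ℕ} (f : (Fin n → ℝ) → ℝ) (k : Fin n) (x : Fin n → ℝ) : ℝ :=
  fderiv ℝ f x (Pi.single k 1)

/-- The covariant derivative `(∇ₖ g)ᵢⱼ = ∂ₖ gᵢⱼ − Σₗ Γˡₖᵢ gₗⱼ − Σₗ Γˡₖⱼ gᵢₗ` of a
matrix-valued field `g` with respect to the Christoffel symbols `Γ` (written `Γ x l k i`). -/
noncomputable def covDeriv {n : ℕ} (Γ : (Fin n → ℝ) → Fin n → Fin n → Fin n → ℝ)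
    (g : (Fin n → ℝ) → Matrix (Fin n) (Fin n) ℝ) (k i j : Fin n) (x : Fin n → ℝ) : ℝ :=
  pd (fun y => g y i j) k x - (∑ l, Γ x l k i * g x l j) - ∑ l, Γ x l k j * g x i l

/-- A smooth metric on `U`: a smooth field of symmetric invertible matrices. -/
def SmoothMetricOn {n : ℕ} (h : (Fin n → ℝ) → Matrix (Fin n) (Fin n) ℝ)
    (U : Set (Fin n → ℝ)) : Prop :=
  (∀ i j, ContDiffOn ℝ (⊤ : ℕ∞) (fun x => h x i j) U) ∧
  ∀ x ∈ U, (h x).IsSymm ∧ IsUnit (h x)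

/-- Smooth Christoffel symbols on `U`. -/
def SmoothChristoffelOn {n : ℕ} (Γ : (Fin n → ℝ) → Fin n → Fin n → Fin n → ℝ)
    (U : Set (Fin n → ℝ)) : Prop :=
  ∀ l k i, ContDiffOn ℝ (⊤ : ℕ∞) (fun x => Γ x l k i) U

section Leibniz

variable {n : ℕ} {f g : (Fin n → ℝ) → ℝ} {x : Fin n → ℝ}

lemma pd_fun_mul (hf : DifferentiableAt ℝ f x) (hg : DifferentiableAt ℝ g x) (k : Fin n) :
    pd (fun y => f y * g y) k x = f x * pd g k x + g x * pd f k x := by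
  simp [pd, fderiv_fun_mul hf hg]

lemma pd_fun_inv (hf : DifferentiableAt ℝ f x) (hfx : f x ≠ 0) (k : Fin n) :
    pd (fun y => (f y)⁻¹) k x = -pd f k x / f x ^ 2 := by
  have hinv : HasFDerivAt (fun y => (f y)⁻¹) (-(f x ^ 2)⁻¹ • fderiv ℝ f x) x :=
    (hasDerivAt_inv hfx).comp_hasFDerivAt x hf.hasFDerivAt
  simp [pd, hinv.fderiv, div_eq_inv_mul]

lemma covDeriv_fun_smul (Γ : (Fin n → ℝ) → Fin n → Fin n → Fin n → ℝ)
    {h : (Fin n → ℝ) → Matrix (Fin n) (Fin n) ℝ} {i j : Fin n}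
    (hf : DifferentiableAt ℝ f x) (hh : DifferentiableAt ℝ (fun y => h y i j) x) (k : Fin n) :
    covDeriv Γ (fun y => f y • h y) k i j x =
      f x * covDeriv Γ h k i j x + h x i j * pd f k x := by
  simp only [covDeriv, Matrix.smul_apply, smul_eq_mul, pd_fun_mul hf hh, mul_left_comm _ (f x),
    ← Finset.mul_sum]
  ring

end Leibniz

theorem locallyMetric_of_exact_logDeriv_general {n : ℕ}
    {Γ : (Fin n → ℝ) → Fin n → Fin n → Fin n → ℝ}
    {h : (Fin n → ℝ) → Matrix (Fin n) (Fin n) ℝ} {μ : (Fin n → ℝ) → ℝ} {x : Fin n → ℝ}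
    {i j k : Fin n} (hh : DifferentiableAt ℝ (fun y => h y i j) x)
    (hμ : DifferentiableAt ℝ μ x) (hμx : μ x ≠ 0)
    (hconf : covDeriv Γ h k i j x = h x i j * (pd μ k x / μ x)) :
    covDeriv Γ (fun y => (μ y)⁻¹ • h y) k i j x = 0 := by
  calc covDeriv Γ (fun y => (μ y)⁻¹ • h y) k i j x
      = (μ x)⁻¹ * covDeriv Γ h k i j x + h x i j * pd (fun y => (μ y)⁻¹) k x :=
        covDeriv_fun_smul Γ (hμ.fun_inv hμx) hh k
    _ = (μ x)⁻¹ * (h x i j * (pd μ k x / μ x)) + h x i j * (-pd μ k x / μ x ^ 2) := by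
        rw [hconf, pd_fun_inv hμ hμx]
    _ = 0 := by ring

/-- **Proposition 2 / 3(a)**: if `∇h = h ⊗ Ψ` with `Ψₖ = ∂ₖ(log μ) = (∂ₖμ)/μ` for a smooth
positive function `μ`, then `μ⁻¹ h` is parallel. -/
theorem locallyMetric_of_exact_logDeriv {n : ℕ} (U : Set (Fin n → ℝ)) (hU : IsOpen U)
    (Γ : (Fin n → ℝ) → Fin n → Fin n → Fin n → ℝ) (hΓ : SmoothChristoffelOn Γ U)
    (h : (Fin n → ℝ) → Matrix (Fin n) (Fin n) ℝ) (hh : SmoothMetricOn h U)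
    (μ : (Fin n → ℝ) → ℝ) (hμ : ContDiffOn ℝ (⊤ : ℕ∞) μ U) (hμpos : ∀ x ∈ U, 0 < μ x)
    (hconf : ∀ x ∈ U, ∀ i j k, covDeriv Γ h k i j x = h x i j * (pd μ k x / μ x)) :
    ∀ x ∈ U, ∀ i j k, covDeriv Γ (fun y => (μ y)⁻¹ • h y) k i j x = 0 := by
  intro x hx i j k
  have hUx : U ∈ nhds x := hU.mem_nhds hx
  exact locallyMetric_of_exact_logDeriv_general
    (((hh.1 i j).contDiffAt hUx).differentiableAt (by simp))
    ((hμ.contDiffAt hUx).differentiableAt (by simp)) (hμpos x hx).ne' (hconf x hx i j k)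
end

section
/- Let U ⊆ ℝⁿ be open, let Γ be smooth Christoffel symbols on U, let h be a smooth metric on U, and let Ψ be a smooth closed 1-form on U with ∇h = h ⊗ Ψ. Then the connection given by Γ is locally metric: for every x ∈ U there exists an open neighbourhood V ⊆ U of x and a smooth positive function μ : V → ℝ such that μ⁻¹h is parallel on V, i.e. ∂ₖ(μ⁻¹h)ᵢⱼ − Σₗ Γˡₖᵢ (μ⁻¹h)ₗⱼ − Σₗ Γˡₖⱼ (μ⁻¹h)ᵢₗ = 0 on V for all i,j,k. -/
/-!
On a convex neighbourhood of a point the closed form `Ψ` has a primitive `φ` by the Poincaré lemma.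
Then `μ = exp φ` satisfies `∂ₖμ = μ Ψₖ`, and the Leibniz rule gives
`∇ₖ(μ⁻¹h) = μ⁻¹(∇ₖh - Ψₖ h) = 0`.
-/

theorem contDiffOn_succ_of_hasFDerivAt {𝕜 E F : Type*} [NontriviallyNormedField 𝕜]
    [NormedAddCommGroup E] [NormedSpace 𝕜 E] [NormedAddCommGroup F] [NormedSpace 𝕜 F]
    {s : Set E} {f : E → F} {f' : E → E →L[𝕜] F} {m : ℕ∞} (hs : IsOpen s)
    (hf : ∀ x ∈ s, HasFDerivAt f (f' x) x) (hf' : ContDiffOn 𝕜 m f' s) :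
    ContDiffOn 𝕜 (m + 1) f s := by
  rw [contDiffOn_succ_iff_fderiv_of_isOpen hs]
  exact ⟨fun x hx => (hf x hx).differentiableAt.differentiableWithinAt, by simp,
    hf'.congr fun x hx => (hf x hx).fderiv⟩

theorem apply_comm_of_apply_basis_comm {R M N ι : Type*} [CommSemiring R] [AddCommMonoid M]
    [Module R M] [AddCommMonoid N] [Module R N] (b : Module.Basis ι R M) (B : M →ₗ[R] M →ₗ[R] N)
    (hB : ∀ i j, B (b i) (b j) = B (b j) (b i)) (v w : M) : B v w = B w v := by
  have eq_flip : B = B.flip := LinearMap.ext_basis b b hB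
  exact LinearMap.congr_fun₂ eq_flip v w

section OneForm

variable {n : ℕ} {V : Set (Fin n → ℝ)} {Ψ : (Fin n → ℝ) → Fin n → ℝ}

/-- The 1-form `Σₖ Ψₖ dxᵏ` with components `Ψ`, as a field of continuous linear functionals;
this is the form in which Mathlib states the Poincaré lemma. -/
noncomputable def oneFormOfComponents (Ψ : (Fin n → ℝ) → Fin n → ℝ) (x : Fin n → ℝ) :
    (Fin n → ℝ) →L[ℝ] ℝ :=
  (ContinuousLinearEquiv.piRing (𝕜 := ℝ) (E := ℝ) (Fin n)).symm (Ψ x)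

theorem oneFormOfComponents_apply_single (x : Fin n → ℝ) (k : Fin n) :
    oneFormOfComponents Ψ x (Pi.single k 1) = Ψ x k :=
  congrFun ((ContinuousLinearEquiv.piRing (𝕜 := ℝ) (E := ℝ) (Fin n)).apply_symm_apply (Ψ x)) k

theorem contDiffOn_oneFormOfComponents {m : WithTop ℕ∞}
    (hΨ : ∀ k, ContDiffOn ℝ m (fun x => Ψ x k) V) :
    ContDiffOn ℝ m (oneFormOfComponents Ψ) V :=
  (ContinuousLinearEquiv.piRing (𝕜 := ℝ) (E := ℝ) (Fin n)).symm.contDiff.comp_contDiffOn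
    (contDiffOn_pi.2 hΨ)

theorem fderiv_oneFormOfComponents_apply_single {x : Fin n → ℝ}
    (hω : DifferentiableAt ℝ (oneFormOfComponents Ψ) x) (i j : Fin n) :
    fderiv ℝ (oneFormOfComponents Ψ) x (Pi.single i 1) (Pi.single j 1) =
      pd (fun y => Ψ y j) i x := by
  simp only [pd, ← oneFormOfComponents_apply_single (Ψ := Ψ)]
  rw [fderiv_clm_apply hω (differentiableAt_const _)]
  simp

theorem fderiv_oneFormOfComponents_comm {x : Fin n → ℝ}
    (hω : DifferentiableAt ℝ (oneFormOfComponents Ψ) x)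
    (hΨclosed : ∀ i j, pd (fun y => Ψ y j) i x = pd (fun y => Ψ y i) j x) (v w : Fin n → ℝ) :
    fderiv ℝ (oneFormOfComponents Ψ) x v w = fderiv ℝ (oneFormOfComponents Ψ) x w v := by
  refine apply_comm_of_apply_basis_comm (Pi.basisFun ℝ (Fin n))
    (fderiv ℝ (oneFormOfComponents Ψ) x).toLinearMap₁₂ (fun i j => ?_) v w
  simpa [fderiv_oneFormOfComponents_apply_single hω] using hΨclosed i j

theorem exists_contDiffOn_succ_pd_eq_of_closed {m : ℕ∞} (hm : m ≠ 0) (hV : IsOpen V)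
    (hVconv : Convex ℝ V) (hΨ : ∀ k, ContDiffOn ℝ m (fun x => Ψ x k) V)
    (hΨclosed : ∀ x ∈ V, ∀ i j, pd (fun y => Ψ y j) i x = pd (fun y => Ψ y i) j x) :
    ∃ φ : (Fin n → ℝ) → ℝ, ContDiffOn ℝ (m + 1) φ V ∧ ∀ x ∈ V, ∀ k, pd φ k x = Ψ x k := by
  have hω : ContDiffOn ℝ m (oneFormOfComponents Ψ) V := contDiffOn_oneFormOfComponents hΨ
  have hωdiff : DifferentiableOn ℝ (oneFormOfComponents Ψ) V :=
    hω.differentiableOn (by exact_mod_cast hm)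
  obtain ⟨φ, hφ⟩ := hVconv.exists_forall_hasFDerivAt_of_fderiv_symmetric hV hωdiff fun x hx =>
    fderiv_oneFormOfComponents_comm (hωdiff.differentiableAt (hV.mem_nhds hx)) (hΨclosed x hx)
  refine ⟨φ, contDiffOn_succ_of_hasFDerivAt hV hφ hω, fun x hx k => ?_⟩
  rw [pd, (hφ x hx).fderiv, oneFormOfComponents_apply_single]

theorem exists_contDiffOn_succ_pos_pd_eq_mul_of_closed {m : ℕ∞} (hm : m ≠ 0) (hV : IsOpen V)
    (hVconv : Convex ℝ V) (hΨ : ∀ k, ContDiffOn ℝ m (fun x => Ψ x k) V)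
    (hΨclosed : ∀ x ∈ V, ∀ i j, pd (fun y => Ψ y j) i x = pd (fun y => Ψ y i) j x) :
    ∃ μ : (Fin n → ℝ) → ℝ, ContDiffOn ℝ (m + 1) μ V ∧ (∀ x ∈ V, 0 < μ x) ∧
      ∀ x ∈ V, ∀ k, pd μ k x = μ x * Ψ x k := by
  obtain ⟨φ, hφ, hφΨ⟩ := exists_contDiffOn_succ_pd_eq_of_closed hm hV hVconv hΨ hΨclosed
  refine ⟨fun x => Real.exp (φ x), hφ.exp, fun x _ => Real.exp_pos _, fun x hx k => ?_⟩
  have hφx : DifferentiableAt ℝ φ x :=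
    (hφ.differentiableOn (by simp)).differentiableAt (hV.mem_nhds hx)
  rw [pd, fderiv_exp hφx, ← hφΨ x hx k]
  rfl

end OneForm

section CovariantDerivative

variable {n : ℕ} {x : Fin n → ℝ} {g : (Fin n → ℝ) → Matrix (Fin n) (Fin n) ℝ}

theorem pd_mul {u v : (Fin n → ℝ) → ℝ} (hu : DifferentiableAt ℝ u x)
    (hv : DifferentiableAt ℝ v x) (k : Fin n) :
    pd (fun y => u y * v y) k x = pd u k x * v x + u x * pd v k x := by
  rw [pd, fderiv_fun_mul hu hv]
  simp only [add_apply, smul_apply, smul_eq_mul, pd]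
  ring

theorem pd_inv {u : (Fin n → ℝ) → ℝ} (hu : DifferentiableAt ℝ u x) (hux : u x ≠ 0)
    (k : Fin n) : pd (fun y => (u y)⁻¹) k x = -pd u k x / u x ^ 2 := by
  have hinv : HasFDerivAt (fun y => (u y)⁻¹) (-(u x ^ 2)⁻¹ • fderiv ℝ u x) x :=
    (hasDerivAt_inv hux).comp_hasFDerivAt x hu.hasFDerivAt
  rw [pd, hinv.fderiv]
  simp only [smul_apply, smul_eq_mul, pd]
  ring

theorem covDeriv_smul (Γ : (Fin n → ℝ) → Fin n → Fin n → Fin n → ℝ) {u : (Fin n → ℝ) → ℝ}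
    {i j : Fin n} (hu : DifferentiableAt ℝ u x) (hg : DifferentiableAt ℝ (fun y => g y i j) x)
    (k : Fin n) :
    covDeriv Γ (fun y => u y • g y) k i j x =
      pd u k x * g x i j + u x * covDeriv Γ g k i j x := by
  simp only [covDeriv, Matrix.smul_apply, smul_eq_mul, pd_mul hu hg, mul_left_comm _ (u x),
    ← Finset.mul_sum]
  ring

theorem covDeriv_inv_smul_eq_zero {Γ : (Fin n → ℝ) → Fin n → Fin n → Fin n → ℝ}
    {μ : (Fin n → ℝ) → ℝ} {i j k : Fin n} {ψ : ℝ} (hμ : DifferentiableAt ℝ μ x) (hμx : μ x ≠ 0)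
    (hg : DifferentiableAt ℝ (fun y => g y i j) x) (hμψ : pd μ k x = μ x * ψ)
    (hgψ : covDeriv Γ g k i j x = g x i j * ψ) :
    covDeriv Γ (fun y => (μ y)⁻¹ • g y) k i j x = 0 := by
  rw [covDeriv_smul Γ (hμ.fun_inv hμx) hg, pd_inv hμ hμx, hμψ, hgψ]
  field_simp
  ring

end CovariantDerivative

theorem locallyMetric_of_closed_oneForm_general {n : ℕ} {m : ℕ∞} (hm : m ≠ 0)
    {U : Set (Fin n → ℝ)} (hU : IsOpen U) {Γ : (Fin n → ℝ) → Fin n → Fin n → Fin n → ℝ}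
    {g : (Fin n → ℝ) → Matrix (Fin n) (Fin n) ℝ}
    (hg : ∀ i j, DifferentiableOn ℝ (fun x => g x i j) U) {Ψ : (Fin n → ℝ) → Fin n → ℝ}
    (hΨ : ∀ k, ContDiffOn ℝ m (fun x => Ψ x k) U)
    (hΨclosed : ∀ x ∈ U, ∀ i j, pd (fun y => Ψ y j) i x = pd (fun y => Ψ y i) j x)
    (hgΨ : ∀ x ∈ U, ∀ i j k, covDeriv Γ g k i j x = g x i j * Ψ x k) :
    ∀ x ∈ U, ∃ V : Set (Fin n → ℝ), IsOpen V ∧ x ∈ V ∧ V ⊆ U ∧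
      ∃ μ : (Fin n → ℝ) → ℝ, ContDiffOn ℝ (m + 1) μ V ∧ (∀ y ∈ V, 0 < μ y) ∧
        ∀ y ∈ V, ∀ i j k, covDeriv Γ (fun z => (μ z)⁻¹ • g z) k i j y = 0 := by
  intro x hx
  obtain ⟨r, hr, hrU⟩ := Metric.isOpen_iff.1 hU x hx
  obtain ⟨μ, hμ, hμpos, hμΨ⟩ := exists_contDiffOn_succ_pos_pd_eq_mul_of_closed hm
    Metric.isOpen_ball (convex_ball x r) (fun k => (hΨ k).mono hrU)
    fun y hy => hΨclosed y (hrU hy)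
  refine ⟨Metric.ball x r, Metric.isOpen_ball, Metric.mem_ball_self hr, hrU, μ, hμ, hμpos,
    fun y hy i j k => ?_⟩
  have hμy : DifferentiableAt ℝ μ y :=
    (hμ.differentiableOn (by simp)).differentiableAt (Metric.isOpen_ball.mem_nhds hy)
  have hgy : DifferentiableAt ℝ (fun z => g z i j) y :=
    (hg i j).differentiableAt (hU.mem_nhds (hrU hy))
  exact covDeriv_inv_smul_eq_zero hμy (hμpos y hy).ne' hgy (hμΨ y hy k) (hgΨ y (hrU hy) i j k)

/-- **Proposition 2**: if `∇h = h ⊗ Ψ` for a smooth closed 1-form `Ψ`, then the connection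
given by `Γ` is locally metric: around each point of `U` there is a smooth positive
function `μ` such that `μ⁻¹ h` is parallel. -/
theorem locallyMetric_of_closed_oneForm {n : ℕ} (U : Set (Fin n → ℝ)) (hU : IsOpen U)
    (Γ : (Fin n → ℝ) → Fin n → Fin n → Fin n → ℝ) (hΓ : SmoothChristoffelOn Γ U)
    (h : (Fin n → ℝ) → Matrix (Fin n) (Fin n) ℝ) (hh : SmoothMetricOn h U)
    (Ψ : (Fin n → ℝ) → Fin n → ℝ)
    (hΨsmooth : ∀ k, ContDiffOn ℝ (⊤ : ℕ∞) (fun x => Ψ x k) U)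
    (hΨclosed : ∀ x ∈ U, ∀ i j, pd (fun y => Ψ y j) i x = pd (fun y => Ψ y i) j x)
    (heq : ∀ x ∈ U, ∀ i j k, covDeriv Γ h k i j x = h x i j * Ψ x k) :
    ∀ x ∈ U, ∃ V : Set (Fin n → ℝ), IsOpen V ∧ x ∈ V ∧ V ⊆ U ∧
      ∃ μ : (Fin n → ℝ) → ℝ, ContDiffOn ℝ (⊤ : ℕ∞) μ V ∧ (∀ y ∈ V, 0 < μ y) ∧
        ∀ y ∈ V, ∀ i j k, covDeriv Γ (fun z => (μ z)⁻¹ • h z) k i j y = 0 :=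
  locallyMetric_of_closed_oneForm_general (m := ⊤) (by simp) hU
    (fun i j => (hh.1 i j).differentiableOn (by simp)) hΨsmooth hΨclosed heq
end
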